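/- Let $m \ge 1$ and $1 \le p \le m$ be integers, let $h_1 \ge h_2 \ge \dots \ge h_m \ge 0$ be reals, and write $M=\{1,\dots,m\}$. The mixing set with a cardinality constraint is $$F_c^= = \Big\{(z,x) \in \mathbb{R}_{\ge 0}\times\{0,1\}^m : \ x_i = 0 \Rightarrow z \ge h_i \ (i\in M),\ \sum_{i=1}^m x_i \le p\Big\}.$$ Its bilinear lifting $S_c^=$ is the set of all $(z,x;y)$ with $z \ge 0$, $x\in[0,1]^m$, $\sum_{i=1}^m x_i\le p$, $y \in \mathbb{Z}_{\ge 0}^m$, $\sum_{i=1}^m y_i \le 1$ such that $(1-x_i)(1-\sum_{j=1}^m y_j) = 0$, $(z-h_i)\,y_i \ge 0$ and $x_i y_i \le 0$ for all $i\in M$, and $(1-x_i)\,y_j \le 0$ for all $i<j$ in $M$. Let $r \in \{1,\dots,p\}$, $l \in \{1,\dots,r\}$ and $v \in \{1,\dots,p-r\}$, and set $s_\iota = p-r-v+\iota$ for $\iota = 1,\dots,v+1$. Let $1 \le t_1 < \dots < t_l \le r$, with the convention $t_{l+1} := r+s_1$. Let $\delta_{t_\iota} \in \mathbb{R}$, $\iota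 = 1,\dots,l$, satisfy: $\delta_{t_\iota} \ge h_{t_{\iota+1}} - h_{t_\iota}$ for every $\iota = 1,\dots,l$; $\sum_{\iota=1}^{k-1} \delta_{t_\iota} \ge 0$ for every $k = 2,\dots,l+1$; and $\sum_{\iota=1}^{l} \delta_{t_\iota} \le h_{r+s_1} - h_{r+s_2}$. Let $q_1,\dots,q_v$ be distinct indices with $r+s_\iota+1 \le q_\iota \le m$ for every $\iota = 1,\dots,v$. Define $\phi_{q_1} = h_{r+s_1} - h_{r+s_2} - \sum_{k=1}^{l} \delta_{t_k}$ and, for $\iota = 2,\dots,v$, $$\phi_{q_\iota} = \max\Big\{ \phi_{q_{\iota-1}},\ h_{r+s_1} - h_{r+s_\iota+1} - \sum_{k=1}^{l} \delta_{t_k} - \sum_{\substack{1\le k\le \iota-1\\ q_k \ge r+s_\iota+1}} \phi_{q_k} \Big\}.$$ Then the BL&P inequality $$z + \sum_{\iota=1}^{l} (h_{t_\iota} - h_{t_{\iota+1}} + \delta_{t_\iota})\, x_{t_\iota} + \sum_{\iota=1}^{v} \phi_{q_\iota} (1 - x_{q_\iota}) \ge h_{t_1}$$ holds for every $(z,x)$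 in the projection of $\operatorname{conv}(S_c^=)$ onto the $(z,x)$-space, and for every $(z,x) \in \operatorname{conv}(F_c^=)$. -/

import Mathlib

/-- The mixing set with a cardinality constraint `F_c^=`: pairs `(z, x)` with `z ≥ 0`, `x` a
binary vector indexed by `{1, …, m}`, `x_i = 0 → z ≥ h_i` for every `i`, and `∑ x_i ≤ p`. -/
def mixingSetCard (m p : ℕ) (h : ℕ → ℝ) : Set (ℝ × (Set.Icc 1 m → ℝ)) :=
  {w | 0 ≤ w.1 ∧ (∀ i, w.2 i = 0 ∨ w.2 i = 1) ∧ (∀ i, w.2 i = 0 → h i ≤ w.1) ∧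
    ∑ i, w.2 i ≤ (p : ℝ)}

/-- The bilinear set `S_c^=` of all `((z, x), y)` with `z ≥ 0`, `x ∈ [0,1]^m`, `∑ x_i ≤ p`,
`y` a nonnegative integer vector with `∑ y_i ≤ 1`, subject to the five families of bilinear
constraints. -/
def bilinearSetCard (m p : ℕ) (h : ℕ → ℝ) :
    Set ((ℝ × (Set.Icc 1 m → ℝ)) × (Set.Icc 1 m → ℝ)) :=
  {w | 0 ≤ w.1.1 ∧ (∀ i, 0 ≤ w.1.2 i) ∧ (∀ i, w.1.2 i ≤ 1) ∧ ∑ i, w.1.2 i ≤ (p : ℝ) ∧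
    (∀ i, ∃ n : ℕ, w.2 i = (n : ℝ)) ∧ ∑ i, w.2 i ≤ 1 ∧
    (∀ i, 0 ≤ (1 - w.1.2 i) * (1 - ∑ j, w.2 j)) ∧
    (∀ i, 0 ≤ -((1 - w.1.2 i) * (1 - ∑ j, w.2 j))) ∧
    (∀ i, 0 ≤ w.1.1 * w.2 i - h i * w.2 i) ∧
    (∀ i, 0 ≤ -(w.1.2 i * w.2 i)) ∧
    (∀ i j, i < j → 0 ≤ -((1 - w.1.2 i) * w.2 j))}

/-- `s_ι = p - r - v + ι` (used only when `r + v ≤ p`). -/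
def blpS (p r v ι : ℕ) : ℕ := p - r - v + ι

/-- The coefficients `φ_{q_ι}`, as a function of `ι = 1, …, v`, given by the recursion
`φ_{q_1} = h_{r+s_1} - h_{r+s_2} - ∑_{k=1}^l δ_k` and, for `ι ≥ 2`,
`φ_{q_ι} = max {φ_{q_{ι-1}}, h_{r+s_1} - h_{r+s_ι+1} - ∑_{k=1}^l δ_k - ∑ φ_{q_k}}`, the last sum
over the `k ∈ {1, …, ι-1}` with `q_k ≥ r+s_ι+1`. The value at `ι = 0` is a dummy. -/
noncomputable def blpPhi (p r l v : ℕ) (h δ : ℕ → ℝ) (q : ℕ → ℕ) : ℕ → ℝ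
  | 0 => 0
  | 1 => h (r + blpS p r v 1) - h (r + blpS p r v 2) - ∑ k ∈ Finset.Icc 1 l, δ k
  | ι + 2 =>
    max (blpPhi p r l v h δ q (ι + 1))
      (h (r + blpS p r v 1) - h (r + blpS p r v (ι + 2) + 1) - ∑ k ∈ Finset.Icc 1 l, δ k
        - ∑ k : Fin (ι + 1),
            if r + blpS p r v (ι + 2) + 1 ≤ q (k + 1) then
              blpPhi p r l v h δ q (k + 1) else 0)

/-- The point `w = (z, x)` satisfies
`z + ∑_{ι=1}^l (h_{t_ι} - h_{t_{ι+1}} + δ_ι) x_{t_ι} + ∑_{ι=1}^v φ_ι (1 - x_{q_ι}) ≥ h_{t_1}`. -/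
def BLPInequality {m : ℕ} (l v : ℕ) (h : ℕ → ℝ) (t q : ℕ → Set.Icc 1 m) (δ φ : ℕ → ℝ)
    (w : ℝ × (Set.Icc 1 m → ℝ)) : Prop :=
  w.1 + ∑ ι ∈ Finset.Icc 1 l, (h (t ι) - h (t (ι + 1)) + δ ι) * w.2 (t ι)
    + ∑ ι ∈ Finset.Icc 1 v, φ ι * (1 - w.2 (q ι)) ≥ h (t 1)

/-- The point `w = (z, x)` has `x ∈ [0,1]^m`, `∑ x_i ≤ p`, every coordinate of `x` before `j`
equal to `1`, and `z ≥ h_j`. When `p < m`, all points of `mixingSetCard` and of the projection of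
`bilinearSetCard` have this form for some `j`. -/
structure HasOnesBefore {m : ℕ} (p : ℕ) (h : ℕ → ℝ) (w : ℝ × (Set.Icc 1 m → ℝ))
    (j : Set.Icc 1 m) : Prop where
  nonneg : ∀ i, 0 ≤ w.2 i
  le_one : ∀ i, w.2 i ≤ 1
  card : ∑ i, w.2 i ≤ (p : ℝ)
  before : ∀ i, i < j → w.2 i = 1
  le_height : h j ≤ w.1

lemma exists_ne_one_of_sum_le {m p : ℕ} (hpm : p < m) {x : Set.Icc 1 m → ℝ}
    (hx : ∑ i, x i ≤ (p : ℝ)) : ∃ i, x i ≠ 1 := by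
  by_contra! hc
  simp only [hc, Finset.sum_const, Finset.card_univ, nsmul_eq_mul, mul_one] at hx
  have : (m : ℝ) ≤ p := by simpa using hx
  exact absurd (Nat.cast_le.mp this) (by omega)

lemma exists_hasOnesBefore_of_mem_mixingSetCard {m p : ℕ} (hpm : p < m) {h : ℕ → ℝ}
    {w : ℝ × (Set.Icc 1 m → ℝ)} (hw : w ∈ mixingSetCard m p h) :
    ∃ j, HasOnesBefore p h w j := by
  obtain ⟨-, hbin, hz, hsum⟩ := hw
  obtain ⟨i, hi⟩ := exists_ne_one_of_sum_le hpm hsum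
  obtain ⟨j, hj, hmin⟩ := wellFounded_lt.has_min {i | w.2 i ≠ 1} ⟨i, hi⟩
  refine ⟨j, fun i => ?_, fun i => ?_, hsum, fun i hij => ?_, hz j ((hbin j).resolve_right hj)⟩
  · rcases hbin i with h0 | h1 <;> simp [*]
  · rcases hbin i with h0 | h1 <;> simp [*]
  · by_contra hne
    exact hmin i hne hij

lemma exists_hasOnesBefore_of_mem_bilinearSetCard {m p : ℕ} (hpm : p < m) {h : ℕ → ℝ}
    {w : (ℝ × (Set.Icc 1 m → ℝ)) × (Set.Icc 1 m → ℝ)} (hw : w ∈ bilinearSetCard m p h) :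
    ∃ j, HasOnesBefore p h w.1 j := by
  obtain ⟨-, hx0, hx1, hsum, hint, -, hge, hle, hz, -, hbefore⟩ := hw
  obtain ⟨i, hi⟩ := exists_ne_one_of_sum_le hpm hsum
  have hprod : (1 - w.1.2 i) * (1 - ∑ j, w.2 j) = 0 := by linarith [hge i, hle i]
  have hysum : ∑ j, w.2 j = 1 := by
    rcases mul_eq_zero.mp hprod with h0 | h0
    · exact absurd (by linarith) hi
    · linarith
  obtain ⟨j, -, hj⟩ := Finset.exists_ne_zero_of_sum_ne_zero (hysum.trans_ne one_ne_zero)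
  have hjpos : 0 < w.2 j := by
    obtain ⟨n, hn⟩ := hint j
    exact lt_of_le_of_ne (hn ▸ n.cast_nonneg) hj.symm
  refine ⟨j, hx0, hx1, hsum, fun i hij => ?_, ?_⟩
  · nlinarith [hbefore i j hij, hx1 i]
  · nlinarith [hz j]

/-- If all coordinates before `j` equal `1`, the coordinates at distinct indices `q_k ≥ j`
sum to at most `p - (j - 1)`. -/
lemma HasOnesBefore.sum_le {m p : ℕ} {h : ℕ → ℝ} {w : ℝ × (Set.Icc 1 m → ℝ)} {j : Set.Icc 1 m}
    (hw : HasOnesBefore p h w j) {T : Finset ℕ} {q : ℕ → Set.Icc 1 m} (hq : Set.InjOn q T)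
    (hT : ∀ k ∈ T, j ≤ q k) : ∑ k ∈ T, w.2 (q k) + ((j : ℕ) - 1 : ℝ) ≤ p := by
  classical
  have hbefore : ∑ i ∈ Finset.univ.filter (· < j), w.2 i = ((j : ℕ) - 1 : ℝ) := by
    rw [Finset.sum_congr rfl fun i hi => hw.before i (Finset.mem_filter.mp hi).2]
    have hcard : (Finset.univ.filter (· < j)).card = (j : ℕ) - 1 := by
      rw [← Finset.card_map (Function.Embedding.subtype _), ← Nat.card_Ico]
      congr 1
      ext a
      have := j.2.2
      simp only [Finset.mem_map, Finset.mem_filter, Finset.mem_univ, true_and,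
        Function.Embedding.coe_subtype, Finset.mem_Ico]
      constructor
      · rintro ⟨b, hb, rfl⟩
        exact ⟨b.2.1, hb⟩
      · rintro ⟨h1, h2⟩
        exact ⟨⟨a, h1, by omega⟩, h2, rfl⟩
    rw [Finset.sum_const, hcard, nsmul_eq_mul, mul_one, Nat.cast_sub j.2.1, Nat.cast_one]
  rw [← hbefore, ← Finset.sum_image hq, ← Finset.sum_union]
  · exact (Finset.sum_le_univ_sum_of_nonneg hw.nonneg).trans hw.card
  · rw [Finset.disjoint_left]
    intro i hi hi'
    obtain ⟨k, hk, rfl⟩ := Finset.mem_image.mp hi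
    exact absurd (Finset.mem_filter.mp hi').2 (hT k hk).not_gt

lemma convex_setOf_BLPInequality {m : ℕ} (l v : ℕ) (h : ℕ → ℝ) (t q : ℕ → Set.Icc 1 m)
    (δ φ : ℕ → ℝ) : Convex ℝ {w | BLPInequality l v h t q δ φ w} := by
  intro x hx y hy a b ha hb hab
  simp only [BLPInequality, Set.mem_ofPred_eq, ge_iff_le] at hx hy ⊢
  have hc : h (t 1) = a * h (t 1) + b * h (t 1) := by rw [← add_mul, hab, one_mul]
  rw [hc]
  refine (add_le_add (mul_le_mul_of_nonneg_left hx ha)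
    (mul_le_mul_of_nonneg_left hy hb)).trans_eq ?_
  obtain rfl : b = 1 - a := by linarith
  simp only [Prod.fst_add, Prod.snd_add, Prod.smul_fst, Prod.smul_snd, Pi.add_apply,
    Pi.smul_apply, smul_eq_mul]
  have ht : ∑ ι ∈ Finset.Icc 1 l,
        (h (t ι) - h (t (ι + 1)) + δ ι) * (a * x.2 (t ι) + (1 - a) * y.2 (t ι)) =
      a * ∑ ι ∈ Finset.Icc 1 l, (h (t ι) - h (t (ι + 1)) + δ ι) * x.2 (t ι) +
        (1 - a) * ∑ ι ∈ Finset.Icc 1 l, (h (t ι) - h (t (ι + 1)) + δ ι) * y.2 (t ι) := by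
    rw [Finset.mul_sum, Finset.mul_sum, ← Finset.sum_add_distrib]
    exact Finset.sum_congr rfl fun _ _ => by ring
  have hq : ∑ ι ∈ Finset.Icc 1 v, φ ι * (1 - (a * x.2 (q ι) + (1 - a) * y.2 (q ι))) =
      a * ∑ ι ∈ Finset.Icc 1 v, φ ι * (1 - x.2 (q ι)) +
        (1 - a) * ∑ ι ∈ Finset.Icc 1 v, φ ι * (1 - y.2 (q ι)) := by
    rw [Finset.mul_sum, Finset.mul_sum, ← Finset.sum_add_distrib]
    exact Finset.sum_congr rfl fun _ _ => by ring
  rw [ht, hq]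
  ring

/-- Either all of `t_1, …, t_l` lie below `j`, or some `t_{K+1}` is the first one that does not. -/
lemma forall_lt_or_exists_first_le {α : Type*} [LinearOrder α] (t : ℕ → α) (j : α) (l : ℕ) :
    (∀ ι ∈ Finset.Icc 1 l, t ι < j) ∨
      ∃ K < l, (∀ ι ∈ Finset.Icc 1 K, t ι < j) ∧ j ≤ t (K + 1) := by
  induction l with
  | zero => simp
  | succ l ih =>
    rcases ih with hall | ⟨K, hK, hlt, hle⟩
    · rcases lt_or_ge (t (l + 1)) j with hlt | hle
      · left
        intro ι hι
        rw [Finset.mem_Icc] at hι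
        rcases hι.2.eq_or_lt with rfl | hlt'
        · exact hlt
        · exact hall ι (Finset.mem_Icc.mpr ⟨hι.1, by omega⟩)
      · exact Or.inr ⟨l, by omega, hall, hle⟩
    · exact Or.inr ⟨K, by omega, hlt, hle⟩

lemma sum_Icc_sub_succ_add (g δ : ℕ → ℝ) (K : ℕ) :
    ∑ ι ∈ Finset.Icc 1 K, (g ι - g (ι + 1) + δ ι) =
      g 1 - g (K + 1) + ∑ ι ∈ Finset.Icc 1 K, δ ι := by
  induction K with
  | zero => simp
  | succ K ih =>
    rw [Finset.sum_Icc_succ_top (by omega), Finset.sum_Icc_succ_top (by omega), ih]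
    ring

section Phi

variable {p r l v : ℕ} {h δ : ℕ → ℝ} {q : ℕ → ℕ}

lemma blpPhi_le_succ {k : ℕ} (hk : 1 ≤ k) :
    blpPhi p r l v h δ q k ≤ blpPhi p r l v h δ q (k + 1) := by
  obtain ⟨k, rfl⟩ := Nat.exists_eq_add_of_le' hk
  rw [blpPhi.eq_3]
  exact le_max_left _ _

lemma blpPhi_mono {a b : ℕ} (ha : 1 ≤ a) (hab : a ≤ b) :
    blpPhi p r l v h δ q a ≤ blpPhi p r l v h δ q b := by
  induction b, hab using Nat.le_induction with
  | base => exact le_rfl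
  | succ n hn ih => exact ih.trans (blpPhi_le_succ (ha.trans hn))

lemma blpPhi_nonneg
    (hδub : ∑ ι ∈ Finset.Icc 1 l, δ ι ≤ h (r + blpS p r v 1) - h (r + blpS p r v 2))
    {k : ℕ} (hk : 1 ≤ k) : 0 ≤ blpPhi p r l v h δ q k := by
  refine le_trans ?_ (blpPhi_mono le_rfl hk)
  rw [blpPhi.eq_2]
  linarith

/-- The lower bound for partial sums of the coefficients that the recursion enforces. -/
lemma le_sum_blpPhi {ι : ℕ} (hι : 1 ≤ ι) (hq : r + blpS p r v ι + 1 ≤ q ι) :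
    h (r + blpS p r v 1) - h (r + blpS p r v ι + 1) - ∑ k ∈ Finset.Icc 1 l, δ k ≤
      ∑ k ∈ (Finset.Icc 1 ι).filter (fun k => r + blpS p r v ι + 1 ≤ q k),
        blpPhi p r l v h δ q k := by
  obtain ⟨n, rfl⟩ := Nat.exists_eq_add_of_le' hι
  rw [Finset.sum_filter, Finset.sum_Icc_succ_top hι, if_pos hq]
  rcases n with _ | n
  · simp [blpPhi, blpS, add_assoc]
  · have hsum : ∑ k ∈ Finset.Icc 1 (n + 1),
          (if r + blpS p r v (n + 2) + 1 ≤ q k then blpPhi p r l v h δ q k else 0) =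
        ∑ k : Fin (n + 1), if r + blpS p r v (n + 2) + 1 ≤ q (k + 1) then
          blpPhi p r l v h δ q (k + 1) else 0 := by
      rw [Fin.sum_univ_eq_sum_range (fun k => if r + blpS p r v (n + 2) + 1 ≤ q (k + 1) then
          blpPhi p r l v h δ q (k + 1) else 0), Finset.range_eq_Ico,
        Finset.sum_Ico_add' (fun k => if r + blpS p r v (n + 2) + 1 ≤ q k then
          blpPhi p r l v h δ q k else 0)]
      rfl
    rw [hsum]
    have := le_max_right (blpPhi p r l v h δ q (n + 1))
      (h (r + blpS p r v 1) - h (r + blpS p r v (n + 2) + 1) - ∑ k ∈ Finset.Icc 1 l, δ k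
        - ∑ k : Fin (n + 1), if r + blpS p r v (n + 2) + 1 ≤ q (k + 1) then
            blpPhi p r l v h δ q (k + 1) else 0)
    rw [← blpPhi.eq_3] at this
    linarith

end Phi

/-- If weights `u ∈ [0,1]` on `T ⊇ (ι, v]` sum to at most `v - ι`, then for monotone coefficients
the complementary weighted sum is least when `u` is concentrated on `(ι, v]`. -/
lemma sum_filter_le_sum_mul_one_sub {v ι : ℕ} (hι : 1 ≤ ι) (hιv : ι ≤ v) {φ u : ℕ → ℝ}
    (hφ : ∀ a b, 1 ≤ a → a ≤ b → φ a ≤ φ b) (hφ0 : 0 ≤ φ ι)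
    (hu0 : ∀ k, 0 ≤ u k) (hu1 : ∀ k, u k ≤ 1) (P : ℕ → Prop) [DecidablePred P]
    (hP : ∀ k, ι < k → k ≤ v → P k)
    (hsum : ∑ k ∈ (Finset.Icc 1 v).filter P, u k ≤ v - ι) :
    ∑ k ∈ (Finset.Icc 1 ι).filter P, φ k ≤
      ∑ k ∈ (Finset.Icc 1 v).filter P, φ k * (1 - u k) := by
  have hsplit : (Finset.Icc 1 ι).filter P = ((Finset.Icc 1 v).filter P).filter (· ≤ ι) := by
    ext k
    simp only [Finset.mem_filter, Finset.mem_Icc]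
    constructor
    · rintro ⟨⟨h1, h2⟩, h3⟩
      exact ⟨⟨⟨h1, h2.trans hιv⟩, h3⟩, h2⟩
    · rintro ⟨⟨⟨h1, -⟩, h3⟩, h2⟩
      exact ⟨⟨h1, h2⟩, h3⟩
  have hcard : ∑ k ∈ (Finset.Icc 1 v).filter P, (if k ≤ ι then (0 : ℝ) else 1) = v - ι := by
    have heq : ((Finset.Icc 1 v).filter P).filter (fun k => ¬ k ≤ ι) = Finset.Ioc ι v := by
      ext k
      simp only [Finset.mem_filter, Finset.mem_Icc, Finset.mem_Ioc, not_le]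
      constructor
      · rintro ⟨⟨⟨-, h2⟩, -⟩, h4⟩
        exact ⟨h4, h2⟩
      · rintro ⟨h1, h2⟩
        exact ⟨⟨⟨by omega, h2⟩, hP k h1 h2⟩, h1⟩
    simp_rw [← ite_not (p := _ ≤ ι)]
    rw [← Finset.sum_filter, heq]
    simp [Nat.cast_sub hιv]
  have hpoint : ∀ k ∈ (Finset.Icc 1 v).filter P,
      φ ι * ((if k ≤ ι then (0 : ℝ) else 1) - u k) ≤
        φ k * (1 - u k) - (if k ≤ ι then φ k else 0) := by
    intro k hk
    have hk1 := (Finset.mem_Icc.mp (Finset.mem_filter.mp hk).1).1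
    split_ifs with hkι
    · nlinarith [hφ k ι hk1 hkι, hu0 k]
    · nlinarith [hφ ι k hι (by omega), hu1 k]
  have htotal := Finset.sum_le_sum hpoint
  rw [← Finset.mul_sum, Finset.sum_sub_distrib, Finset.sum_sub_distrib, hcard,
    ← Finset.sum_filter, ← hsplit] at htotal
  nlinarith [mul_nonneg hφ0 (sub_nonneg.mpr hsum)]

/-- Validity of the BL&P inequalities for the mixing set with a cardinality constraint.
`δ ι` and `blpPhi … ι` stand for `δ_{t_ι}` and `φ_{q_ι}`; of `t`, `δ`, `q` only the values at
`1, …, l + 1`, at `1, …, l` and at `1, …, v` matter. -/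
theorem blp_inequality_valid_cardinality
    (m p : ℕ) (hp1 : 1 ≤ p) (hpm : p ≤ m)
    (h : ℕ → ℝ)
    (hmono : AntitoneOn h (Set.Icc 1 m))
    (hnonneg : ∀ i ∈ Set.Icc 1 m, 0 ≤ h i)
    (r l v : ℕ) (hr1 : 1 ≤ r) (hrp : r ≤ p) (hl1 : 1 ≤ l) (hlr : l ≤ r)
    (hv1 : 1 ≤ v) (hvp : r + v ≤ p)
    (t : ℕ → Set.Icc 1 m)
    (htmono : StrictMonoOn t (Set.Icc 1 l))
    (htr : ∀ ι ∈ Finset.Icc 1 l, (t ι : ℕ) ≤ r)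
    (httop : (t (l + 1) : ℕ) = r + blpS p r v 1)
    (δ : ℕ → ℝ)
    (hδlb : ∀ ι ∈ Finset.Icc 1 l, δ ι ≥ h (t (ι + 1)) - h (t ι))
    (hδpartial : ∀ k ∈ Finset.Icc 1 l, ∑ ι ∈ Finset.Icc 1 k, δ ι ≥ 0)
    (hδub : ∑ ι ∈ Finset.Icc 1 l, δ ι ≤ h (r + blpS p r v 1) - h (r + blpS p r v 2))
    (q : ℕ → Set.Icc 1 m)
    (hqinj : Set.InjOn q (Set.Icc 1 v))
    (hqlb : ∀ ι ∈ Finset.Icc 1 v, r + blpS p r v ι + 1 ≤ (q ι : ℕ)) :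
    (∀ w ∈ Prod.fst '' convexHull ℝ (bilinearSetCard m p h),
      BLPInequality l v h t q δ (blpPhi p r l v h δ (fun ι => (q ι : ℕ))) w) ∧
    (∀ w ∈ convexHull ℝ (mixingSetCard m p h),
      BLPInequality l v h t q δ (blpPhi p r l v h δ (fun ι => (q ι : ℕ))) w) := by
  have hpm' : p < m := by
    have h1 := hqlb v (Finset.mem_Icc.mpr ⟨hv1, le_rfl⟩)
    have h2 := (q v).2.2
    simp only [blpS] at h1
    omega
  suffices hmain : ∀ w : ℝ × (Set.Icc 1 m → ℝ), (∃ j, HasOnesBefore p h w j) →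
      BLPInequality l v h t q δ (blpPhi p r l v h δ (fun ι => (q ι : ℕ))) w by
    constructor
    · rintro _ ⟨u, hu, rfl⟩
      refine convexHull_min (t := Prod.fst ⁻¹' {w | BLPInequality l v h t q δ _ w})
        (fun u hu => hmain _ (exists_hasOnesBefore_of_mem_bilinearSetCard hpm' hu))
        ((convex_setOf_BLPInequality l v h t q δ _).linear_preimage
          (LinearMap.fst ℝ _ _)) hu
    · exact fun w hw => convexHull_min
        (fun u hu => hmain _ (exists_hasOnesBefore_of_mem_mixingSetCard hpm' hu))
        (convex_setOf_BLPInequality l v h t q δ _) hw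
  rintro w ⟨j, hw⟩
  have hφ0 : ∀ k ∈ Finset.Icc 1 v, 0 ≤ blpPhi p r l v h δ (fun ι => (q ι : ℕ)) k :=
    fun k hk => blpPhi_nonneg hδub (Finset.mem_Icc.mp hk).1
  have hterm0 : ∀ k ∈ Finset.Icc 1 v,
      0 ≤ blpPhi p r l v h δ (fun ι => (q ι : ℕ)) k * (1 - w.2 (q k)) :=
    fun k hk => mul_nonneg (hφ0 k hk) (sub_nonneg.mpr (hw.le_one _))
  have hz := hw.le_height
  have hlow : ∀ K ≤ l, (∀ ι ∈ Finset.Icc 1 K, t ι < j) →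
      h (t 1) - h (t (K + 1)) + ∑ ι ∈ Finset.Icc 1 K, δ ι ≤
        ∑ ι ∈ Finset.Icc 1 l, (h (t ι) - h (t (ι + 1)) + δ ι) * w.2 (t ι) := by
    intro K hK hlt
    rw [← sum_Icc_sub_succ_add (fun ι => h (t ι))]
    refine le_trans (Finset.sum_le_sum fun ι hι => ?_)
      (Finset.sum_le_sum_of_subset_of_nonneg (Finset.Icc_subset_Icc_right hK) fun ι hι _ => ?_)
    · rw [hw.before _ (hlt ι hι), mul_one]
    · exact mul_nonneg (by linarith [hδlb ι hι]) (hw.nonneg _)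
  have hδ0 : ∀ K ≤ l, 0 ≤ ∑ ι ∈ Finset.Icc 1 K, δ ι := by
    intro K hK
    rcases K.eq_zero_or_pos with rfl | hpos
    · simp
    · exact hδpartial K (Finset.mem_Icc.mpr ⟨hpos, hK⟩)
  have hfirst : ∀ K ≤ l, (∀ ι ∈ Finset.Icc 1 K, t ι < j) → j ≤ t (K + 1) →
      BLPInequality l v h t q δ (blpPhi p r l v h δ (fun ι => (q ι : ℕ))) w := by
    intro K hK hlt hle
    have h1 := hlow K hK hlt
    have h2 := hδ0 K hK
    have h3 : h (t (K + 1)) ≤ h j := hmono j.2 (t (K + 1)).2 hle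
    have h4 := Finset.sum_nonneg hterm0
    unfold BLPInequality
    linarith
  rcases forall_lt_or_exists_first_le t j l with hall | ⟨K, hK, hlt, hle⟩
  swap
  · exact hfirst K hK.le hlt hle
  rcases le_or_gt j (t (l + 1)) with hle | hgt
  · exact hfirst l le_rfl hall hle
  -- All `t_ι` and `r + s_1` precede `j = r + s_ι + 1`; the weights `φ` close the remaining gap.
  have hgt' : r + blpS p r v 1 < (j : ℕ) := httop ▸ hgt
  have hjp : (j : ℕ) ≤ p + 1 := by
    have := hw.sum_le (T := ∅) (q := q) (by simp) (by simp)
    rw [Finset.sum_empty, zero_add, sub_le_iff_le_add] at this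
    exact_mod_cast this
  obtain ⟨ι, hι1, hιv, hjι, hjv⟩ : ∃ ι, 1 ≤ ι ∧ ι ≤ v ∧ r + blpS p r v ι + 1 = (j : ℕ) ∧
      (j : ℕ) + v = p + 1 + ι := by
    simp only [blpS] at hgt' ⊢
    exact ⟨(j : ℕ) + v - (p + 1), by omega, by omega, by omega, by omega⟩
  have hsum : ∑ k ∈ (Finset.Icc 1 v).filter (fun k => (j : ℕ) ≤ q k), w.2 (q k) ≤
      (v : ℝ) - ι := by
    have h1 := hw.sum_le (T := (Finset.Icc 1 v).filter (fun k => (j : ℕ) ≤ q k)) (q := q)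
      (hqinj.mono fun k hk => by simpa using (Finset.mem_filter.mp hk).1)
      (fun k hk => (Finset.mem_filter.mp hk).2)
    have h2 : ((j : ℕ) : ℝ) + v = p + 1 + ι := by exact_mod_cast hjv
    linarith
  have hgap := le_sum_blpPhi (h := h) (δ := δ) (l := l) (q := fun ι => (q ι : ℕ)) hι1
    (hqlb ι (Finset.mem_Icc.mpr ⟨hι1, hιv⟩))
  rw [hjι] at hgap
  have hmass := sum_filter_le_sum_mul_one_sub hι1 hιv
    (φ := blpPhi p r l v h δ (fun ι => (q ι : ℕ))) (u := fun k => w.2 (q k))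
    (fun a b ha hab => blpPhi_mono ha hab) (hφ0 ι (Finset.mem_Icc.mpr ⟨hι1, hιv⟩))
    (fun k => hw.nonneg _) (fun k => hw.le_one _) (fun k => (j : ℕ) ≤ q k)
    (fun k hk hkv => by
      have := hqlb k (Finset.mem_Icc.mpr ⟨by omega, hkv⟩)
      simp only [blpS] at this hjι
      omega) hsum
  have hrest := Finset.sum_le_sum_of_subset_of_nonneg
    (Finset.filter_subset (fun k => (j : ℕ) ≤ q k) (Finset.Icc 1 v))
    (fun k hk _ => hterm0 k hk)
  have hl := hlow l le_rfl hall
  rw [httop] at hl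
  unfold BLPInequality
  linarith
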